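/- For every s ∈ ℂ with -1 < Re s < 0 and every real a ≠ 0, ∫_0^∞ e^{iax} x^{-s-1} dx = (-i a)^s Γ(-s), where (-ia)^s is taken with the principal branch of the logarithm and the integral is an improper Riemann integral. -/

import Mathlib

open Complex Filter

/-!
For `0 < Re r` the integral is `Γ` up to scaling, extended from real `r` by the identity theorem.
On the imaginary axis it is only conditionally convergent, so the extension by continuity goes
through an absolutely convergent integral: integrating by parts against `exp (-(r * x)) - 1`, which
vanishes at `0`, gives the Cauchy–Saalschütz integral
`∫ x in Ioi 0, x ^ (p - 1) * (exp (-(r * x)) - 1) = r ^ (-p) * Γ(p)`. Its integrand is dominated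
locally uniformly in `r` on the closed half-plane, and integrating by parts back yields the theorem.
-/

section

open MeasureTheory Set Topology

lemma aestronglyMeasurable_cpow_mul {f : ℝ → ℂ} (hf : Continuous f) (p : ℂ) :
    AEStronglyMeasurable (fun x : ℝ => (x : ℂ) ^ p * f x) (volume.restrict (Ioi 0)) :=
  (ContinuousOn.mul (fun x hx => (continuousAt_ofReal_cpow_const x p
    (Or.inr (ne_of_gt hx))).continuousWithinAt) hf.continuousOn).aestronglyMeasurable
    measurableSet_Ioi

section GammaIntegral

variable {z r : ℂ}

lemma norm_cpow_mul_exp_neg_mul (z r : ℂ) {x : ℝ} (hx : 0 < x) :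
    ‖(x : ℂ) ^ z * exp (-(r * x))‖ = x ^ z.re * Real.exp (-(r.re * x)) := by
  rw [norm_mul, norm_cpow_eq_rpow_re_of_pos hx, norm_exp, neg_re, re_mul_ofReal]

lemma integrableOn_rpow_mul_exp_neg_mul {q b : ℝ} (hq : -1 < q) (hb : 0 < b) :
    IntegrableOn (fun x : ℝ => x ^ q * Real.exp (-(b * x))) (Ioi 0) := by
  simpa only [Real.rpow_one, neg_mul] using integrableOn_rpow_mul_exp_neg_mul_rpow hq one_pos hb

lemma integrableOn_cpow_mul_exp_neg_mul (hz : -1 < z.re) (hr : 0 < r.re) :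
    IntegrableOn (fun x : ℝ => (x : ℂ) ^ z * exp (-(r * x))) (Ioi 0) := by
  refine (integrableOn_rpow_mul_exp_neg_mul hz hr).mono'
    (aestronglyMeasurable_cpow_mul (by fun_prop) z) ?_
  filter_upwards [ae_restrict_mem measurableSet_Ioi] with x hx
  exact (norm_cpow_mul_exp_neg_mul z r hx).le

lemma hasDerivAt_integral_cpow_mul_exp_neg_mul (hz : -1 < z.re) (hr : 0 < r.re) :
    HasDerivAt (fun r : ℂ => ∫ x in Ioi (0 : ℝ), (x : ℂ) ^ z * exp (-(r * x)))
      (∫ x in Ioi (0 : ℝ), -((x : ℂ) ^ (z + 1) * exp (-(r * x)))) r := by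
  have hnhds : {w : ℂ | r.re / 2 < w.re} ∈ 𝓝 r :=
    (isOpen_lt continuous_const continuous_re).mem_nhds (half_lt_self hr)
  refine (hasDerivAt_integral_of_dominated_loc_of_deriv_le
    (F := fun (w : ℂ) (x : ℝ) => (x : ℂ) ^ z * exp (-(w * x)))
    (F' := fun w x => -((x : ℂ) ^ (z + 1) * exp (-(w * x))))
    (bound := fun x : ℝ => x ^ (z + 1).re * Real.exp (-(r.re / 2 * x)))
    hnhds ?_ (integrableOn_cpow_mul_exp_neg_mul hz hr) ?_ ?_ ?_ ?_).2
  · exact .of_forall fun w => aestronglyMeasurable_cpow_mul (by fun_prop) z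
  · exact (aestronglyMeasurable_cpow_mul (by fun_prop) (z + 1)).neg
  · filter_upwards [ae_restrict_mem measurableSet_Ioi] with x (hx : 0 < x) w (hw : _ < _)
    rw [norm_neg, norm_cpow_mul_exp_neg_mul _ _ hx]
    gcongr
  · exact integrableOn_rpow_mul_exp_neg_mul (by rw [add_re, one_re]; linarith) (half_pos hr)
  · filter_upwards [ae_restrict_mem measurableSet_Ioi] with x (hx : 0 < x) w _
    have hexp : HasDerivAt (fun w : ℂ => exp (-(w * x))) (exp (-(w * x)) * -x) w :=
      (hasDerivAt_mul_const (x : ℂ)).neg.cexp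
    convert! hexp.const_mul ((x : ℂ) ^ z) using 1
    rw [cpow_add _ _ (ofReal_ne_zero.mpr hx.ne'), cpow_one]
    ring

lemma integral_cpow_mul_exp_neg_mul_Ioi_of_re_pos (hz : 0 < z.re) (hr : 0 < r.re) :
    ∫ x in Ioi (0 : ℝ), (x : ℂ) ^ (z - 1) * exp (-(r * x)) = r ^ (-z) * Gamma z := by
  have hopen : IsOpen {w : ℂ | 0 < w.re} := isOpen_lt continuous_const continuous_re
  have hz' : -1 < (z - 1).re := by rw [sub_re, one_re]; linarith
  have hleft : AnalyticOnNhd ℂ (fun r : ℂ => ∫ x in Ioi (0 : ℝ),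
      (x : ℂ) ^ (z - 1) * exp (-(r * x))) {w : ℂ | 0 < w.re} :=
    DifferentiableOn.analyticOnNhd (fun _ hw => (hasDerivAt_integral_cpow_mul_exp_neg_mul hz'
      hw).differentiableAt.differentiableWithinAt) hopen
  have hright : AnalyticOnNhd ℂ (fun r : ℂ => r ^ (-z) * Gamma z) {w : ℂ | 0 < w.re} :=
    DifferentiableOn.analyticOnNhd (fun _ hw => ((differentiableAt_id.cpow_const
      (Or.inl hw)).mul_const _).differentiableWithinAt) hopen
  have hreal : ∀ᶠ t : ℝ in 𝓝[≠] 1, ∫ x in Ioi (0 : ℝ), (x : ℂ) ^ (z - 1) * exp (-((t : ℂ) * x)) =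
      (t : ℂ) ^ (-z) * Gamma z := by
    filter_upwards [nhdsWithin_le_nhds (Ioi_mem_nhds one_pos)] with t (ht : 0 < t)
    have harg : (t : ℂ).arg ≠ Real.pi := by
      rw [arg_ofReal_of_nonneg ht.le]
      exact Real.pi_ne_zero.symm
    rw [integral_cpow_mul_exp_neg_mul_Ioi hz ht, one_div, inv_cpow _ _ harg, cpow_neg]
  have hofReal : Tendsto ((↑) : ℝ → ℂ) (𝓝[≠] 1) (𝓝[≠] 1) :=
    ofReal_one ▸ continuous_ofReal.continuousAt.continuousWithinAt.tendsto_nhdsWithin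
      fun _ => mt ofReal_eq_one.mp
  exact hleft.eqOn_of_preconnected_of_frequently_eq hright (convex_halfSpace_re_gt 0).isPreconnected
    (z₀ := 1) (by simp) (hofReal.frequently hreal.frequently) hr

end GammaIntegral

section CauchySaalschutz

variable {p r : ℂ}

lemma norm_exp_sub_one_le_of_re_nonpos {w : ℂ} (hw : w.re ≤ 0) :
    ‖exp w - 1‖ ≤ 2 * min 1 ‖w‖ := by
  rcases le_total ‖w‖ 1 with h | h
  · rw [min_eq_right h]
    exact norm_exp_sub_one_le h
  · have hexp : ‖exp w‖ ≤ 1 := by rwa [norm_exp, Real.exp_le_one_iff]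
    calc ‖exp w - 1‖ ≤ ‖exp w‖ + ‖(1 : ℂ)‖ := norm_sub_le _ _
      _ ≤ 2 * min 1 ‖w‖ := by rw [min_eq_left h, norm_one]; linarith

lemma norm_cpow_mul_exp_neg_mul_sub_one_le (p : ℂ) (hr : 0 ≤ r.re) {x : ℝ} (hx : 0 < x) :
    ‖(x : ℂ) ^ p * (exp (-(r * x)) - 1)‖ ≤ 2 * (x ^ p.re * min 1 (‖r‖ * x)) := by
  have hre : (-(r * x)).re ≤ 0 := by
    rw [neg_re, re_mul_ofReal]
    exact neg_nonpos.mpr (by positivity)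
  have hexp := norm_exp_sub_one_le_of_re_nonpos hre
  rw [norm_neg, norm_mul, norm_real, Real.norm_of_nonneg hx.le] at hexp
  rw [norm_mul, norm_cpow_eq_rpow_re_of_pos hx, mul_left_comm]
  gcongr

lemma integrableOn_rpow_sub_one_mul_min {q M : ℝ} (hq : -1 < q) (hq' : q < 0) (hM : 0 ≤ M) :
    IntegrableOn (fun x : ℝ => x ^ (q - 1) * min 1 (M * x)) (Ioi 0) := by
  have hmeas : Measurable fun x : ℝ => x ^ (q - 1) * min 1 (M * x) := by fun_prop
  rw [← Ioc_union_Ioi_eq_Ioi zero_le_one, integrableOn_union]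
  constructor
  · have hdom : IntegrableOn (fun x : ℝ => M * x ^ q) (Ioc 0 1) :=
      ((intervalIntegrable_iff_integrableOn_Ioc_of_le zero_le_one).mp
        (intervalIntegral.intervalIntegrable_rpow' hq)).const_mul M
    refine hdom.mono' hmeas.aestronglyMeasurable ?_
    filter_upwards [ae_restrict_mem measurableSet_Ioc] with x hx
    have hx0 : 0 < x := hx.1
    rw [Real.norm_of_nonneg (by positivity)]
    calc x ^ (q - 1) * min 1 (M * x) ≤ x ^ (q - 1) * (M * x) := by gcongr; exact min_le_right _ _
      _ = M * x ^ q := by rw [Real.rpow_sub_one hx0.ne']; field_simp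
  · have hdom : IntegrableOn (fun x : ℝ => x ^ (q - 1)) (Ioi 1) :=
      integrableOn_Ioi_rpow_of_lt (by linarith) one_pos
    refine hdom.mono' hmeas.aestronglyMeasurable ?_
    filter_upwards [ae_restrict_mem measurableSet_Ioi] with x (hx : 1 < x)
    have : 0 < x := one_pos.trans hx
    rw [Real.norm_of_nonneg (by positivity)]
    exact mul_le_of_le_one_right (by positivity) (min_le_left _ _)

lemma integrableOn_cpow_sub_one_mul_exp_neg_mul_sub_one (hp : -1 < p.re) (hp' : p.re < 0)
    (hr : 0 ≤ r.re) :
    IntegrableOn (fun x : ℝ => (x : ℂ) ^ (p - 1) * (exp (-(r * x)) - 1)) (Ioi 0) := by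
  refine ((integrableOn_rpow_sub_one_mul_min hp hp' (norm_nonneg r)).const_mul 2).mono'
    (aestronglyMeasurable_cpow_mul (by fun_prop) _) ?_
  filter_upwards [ae_restrict_mem measurableSet_Ioi] with x hx
  simpa only [sub_re, one_re] using norm_cpow_mul_exp_neg_mul_sub_one_le (p - 1) hr hx

lemma continuousOn_integral_cpow_sub_one_mul_exp_neg_mul_sub_one (hp : -1 < p.re)
    (hp' : p.re < 0) :
    ContinuousOn (fun r : ℂ => ∫ x in Ioi (0 : ℝ), (x : ℂ) ^ (p - 1) * (exp (-(r * x)) - 1))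
      {r | 0 ≤ r.re} := by
  intro r _
  have hbounded : ∀ᶠ w in 𝓝[{w : ℂ | 0 ≤ w.re}] r, ‖w‖ < ‖r‖ + 1 :=
    continuous_norm.continuousWithinAt.eventually_lt_const (lt_add_one ‖r‖)
  refine continuousWithinAt_of_dominated
    (bound := fun x : ℝ => 2 * (x ^ (p.re - 1) * min 1 ((‖r‖ + 1) * x)))
    (.of_forall fun w => aestronglyMeasurable_cpow_mul (by fun_prop) _) ?_
    ((integrableOn_rpow_sub_one_mul_min hp hp' (by positivity)).const_mul 2)
    (.of_forall fun x => by fun_prop)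
  filter_upwards [hbounded, self_mem_nhdsWithin] with w hw hw_re
  filter_upwards [ae_restrict_mem measurableSet_Ioi] with x (hx : 0 < x)
  refine (norm_cpow_mul_exp_neg_mul_sub_one_le (p - 1) hw_re hx).trans ?_
  rw [sub_re, one_re]
  gcongr

lemma tendsto_cpow_mul_exp_neg_mul_sub_one_nhdsGT_zero (hp : -1 < p.re) (hr : 0 ≤ r.re) :
    Tendsto (fun x : ℝ => (x : ℂ) ^ p * (exp (-(r * x)) - 1)) (𝓝[>] 0) (𝓝 0) := by
  have hlim : Tendsto (fun x : ℝ => 2 * (‖r‖ * x ^ (p.re + 1))) (𝓝[>] 0) (𝓝 0) := by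
    have hpow := Real.continuousAt_rpow_const 0 (p.re + 1) (Or.inr (by linarith))
    simpa [Real.zero_rpow (show p.re + 1 ≠ 0 by linarith)] using
      ((hpow.tendsto.mono_left nhdsWithin_le_nhds).const_mul ‖r‖).const_mul 2
  refine squeeze_zero_norm' ?_ hlim
  filter_upwards [self_mem_nhdsWithin] with x (hx : 0 < x)
  calc ‖(x : ℂ) ^ p * (exp (-(r * x)) - 1)‖ ≤ 2 * (x ^ p.re * min 1 (‖r‖ * x)) :=
        norm_cpow_mul_exp_neg_mul_sub_one_le p hr hx
    _ ≤ 2 * (x ^ p.re * (‖r‖ * x)) := by gcongr; exact min_le_right _ _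
    _ = 2 * (‖r‖ * x ^ (p.re + 1)) := by rw [Real.rpow_add_one hx.ne']; ring

lemma tendsto_cpow_mul_exp_neg_mul_sub_one_atTop (hp : p.re < 0) (hr : 0 ≤ r.re) :
    Tendsto (fun x : ℝ => (x : ℂ) ^ p * (exp (-(r * x)) - 1)) atTop (𝓝 0) := by
  have hlim : Tendsto (fun x : ℝ => 2 * x ^ p.re) atTop (𝓝 0) := by
    simpa using (tendsto_rpow_neg_atTop (neg_pos.mpr hp)).const_mul 2
  refine squeeze_zero_norm' ?_ hlim
  filter_upwards [eventually_gt_atTop 0] with x hx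
  refine (norm_cpow_mul_exp_neg_mul_sub_one_le p hr hx).trans ?_
  gcongr
  exact mul_le_of_le_one_right (by positivity) (min_le_left _ _)

lemma hasDerivAt_cpow_mul_exp_neg_mul_sub_one (p r : ℂ) {x : ℝ} (hx : 0 < x) :
    HasDerivAt (fun x : ℝ => (x : ℂ) ^ p * (exp (-(r * x)) - 1))
      (p * ((x : ℂ) ^ (p - 1) * (exp (-(r * x)) - 1)) - r * ((x : ℂ) ^ p * exp (-(r * x)))) x := by
  have hcpow : HasDerivAt (fun w : ℂ => w ^ p) (p * (x : ℂ) ^ (p - 1)) x := by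
    simpa using (hasDerivAt_id (x : ℂ)).cpow_const (c := p) (ofReal_mem_slitPlane.mpr hx)
  have hexp : HasDerivAt (fun w : ℂ => exp (-(r * w)) - 1) (exp (-(r * x)) * -r) x :=
    (hasDerivAt_const_mul r).neg.cexp.sub_const 1
  convert! (hcpow.mul hexp).comp_ofReal using 1
  ring

lemma mul_intervalIntegral_cpow_mul_exp_neg_mul (hp : -1 < p.re) (hp' : p.re < 0)
    (hr : 0 ≤ r.re) {T : ℝ} (hT : 0 < T) :
    r * ∫ x in (0 : ℝ)..T, (x : ℂ) ^ p * exp (-(r * x)) =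
      p * (∫ x in (0 : ℝ)..T, (x : ℂ) ^ (p - 1) * (exp (-(r * x)) - 1)) -
        (T : ℂ) ^ p * (exp (-(r * T)) - 1) := by
  have hderiv := fun x (hx : x ∈ Ioo 0 T) => hasDerivAt_cpow_mul_exp_neg_mul_sub_one p r hx.1
  have hint : IntervalIntegrable
      (fun x : ℝ => (x : ℂ) ^ (p - 1) * (exp (-(r * x)) - 1)) volume 0 T :=
    (intervalIntegrable_iff_integrableOn_Ioc_of_le hT.le).mpr
      ((integrableOn_cpow_sub_one_mul_exp_neg_mul_sub_one hp hp' hr).mono_set Ioc_subset_Ioi_self)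
  have hint' : IntervalIntegrable (fun x : ℝ => (x : ℂ) ^ p * exp (-(r * x))) volume 0 T :=
    (intervalIntegral.intervalIntegrable_cpow' hp).mul_continuousOn (by fun_prop)
  have hftc := intervalIntegral.integral_eq_sub_of_hasDerivAt_of_tendsto hT hderiv
    ((hint.const_mul p).sub (hint'.const_mul r))
    (tendsto_cpow_mul_exp_neg_mul_sub_one_nhdsGT_zero hp hr)
    ((hasDerivAt_cpow_mul_exp_neg_mul_sub_one p r hT).continuousAt.tendsto.mono_left
      nhdsWithin_le_nhds)
  rw [intervalIntegral.integral_sub (hint.const_mul p) (hint'.const_mul r),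
    intervalIntegral.integral_const_mul, intervalIntegral.integral_const_mul] at hftc
  linear_combination -hftc

lemma tendsto_mul_intervalIntegral_cpow_mul_exp_neg_mul (hp : -1 < p.re) (hp' : p.re < 0)
    (hr : 0 ≤ r.re) :
    Tendsto (fun T : ℝ => r * ∫ x in (0 : ℝ)..T, (x : ℂ) ^ p * exp (-(r * x))) atTop
      (𝓝 (p * ∫ x in Ioi (0 : ℝ), (x : ℂ) ^ (p - 1) * (exp (-(r * x)) - 1))) := by
  have hlim := ((intervalIntegral_tendsto_integral_Ioi 0
    (integrableOn_cpow_sub_one_mul_exp_neg_mul_sub_one hp hp' hr) tendsto_id).const_mul p).sub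
      (tendsto_cpow_mul_exp_neg_mul_sub_one_atTop hp' hr)
  rw [sub_zero] at hlim
  refine hlim.congr' ?_
  filter_upwards [eventually_gt_atTop 0] with T hT
  exact (mul_intervalIntegral_cpow_mul_exp_neg_mul hp hp' hr hT).symm

lemma mul_cpow_neg_mul_Gamma_add_one (hp : p ≠ 0) (hr : r ≠ 0) :
    r * (r ^ (-(p + 1)) * Gamma (p + 1)) = p * (r ^ (-p) * Gamma p) := by
  rw [Gamma_add_one p hp, neg_add', cpow_sub _ _ hr, cpow_one]
  field_simp

lemma integral_cpow_sub_one_mul_exp_neg_mul_sub_one_of_re_pos (hp : -1 < p.re) (hp' : p.re < 0)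
    (hr : 0 < r.re) :
    ∫ x in Ioi (0 : ℝ), (x : ℂ) ^ (p - 1) * (exp (-(r * x)) - 1) = r ^ (-p) * Gamma p := by
  have hp0 : p ≠ 0 := ne_of_apply_ne re hp'.ne
  have hgamma := integral_cpow_mul_exp_neg_mul_Ioi_of_re_pos (z := p + 1)
    (by rw [add_re, one_re]; linarith) hr
  rw [add_sub_cancel_right] at hgamma
  have hlim := (intervalIntegral_tendsto_integral_Ioi 0
    (integrableOn_cpow_mul_exp_neg_mul hp hr) tendsto_id).const_mul r
  rw [hgamma, mul_cpow_neg_mul_Gamma_add_one hp0 (ne_of_apply_ne re hr.ne')] at hlim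
  exact mul_left_cancel₀ hp0 <| tendsto_nhds_unique
    (tendsto_mul_intervalIntegral_cpow_mul_exp_neg_mul hp hp' hr.le) hlim

lemma continuousOn_cpow_const_re_nonneg {c : ℂ} (hc : 0 < c.re) :
    ContinuousOn (fun r : ℂ => r ^ c) {r | 0 ≤ r.re} :=
  fun _ hr => (continuousAt_cpow_const_of_re_pos (Or.inl hr) hc).continuousWithinAt

theorem integral_cpow_sub_one_mul_exp_neg_mul_sub_one (hp : -1 < p.re) (hp' : p.re < 0)
    (hr : 0 ≤ r.re) :
    ∫ x in Ioi (0 : ℝ), (x : ℂ) ^ (p - 1) * (exp (-(r * x)) - 1) = r ^ (-p) * Gamma p :=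
  EqOn.of_subset_closure (s := {r : ℂ | 0 < r.re})
    (fun _ hw => integral_cpow_sub_one_mul_exp_neg_mul_sub_one_of_re_pos hp hp' hw)
    (continuousOn_integral_cpow_sub_one_mul_exp_neg_mul_sub_one hp hp')
    ((continuousOn_cpow_const_re_nonneg (by rwa [neg_re, neg_pos])).mul_const _)
    (fun w (hw : 0 < w.re) => hw.le) (closure_setOfPred_lt_re 0).ge hr

end CauchySaalschutz

theorem integral_exp_mul_cpow_general (s : ℂ) (h1 : -1 < s.re) (h2 : s.re < 0)
    (r : ℂ) (hr : 0 ≤ r.re) (hr0 : r ≠ 0) :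
    Tendsto (fun T : ℝ => ∫ x in (0 : ℝ)..T, exp (-(r * x)) * (x : ℂ) ^ (-s - 1))
      atTop (𝓝 (r ^ s * Gamma (-s))) := by
  have hp : -1 < (-s - 1).re := by rw [sub_re, neg_re, one_re]; linarith
  have hp' : (-s - 1).re < 0 := by rw [sub_re, neg_re, one_re]; linarith
  have hlim := tendsto_mul_intervalIntegral_cpow_mul_exp_neg_mul hp hp' hr
  rw [integral_cpow_sub_one_mul_exp_neg_mul_sub_one hp hp' hr,
    ← mul_cpow_neg_mul_Gamma_add_one (ne_of_apply_ne re hp'.ne) hr0, sub_add_cancel, neg_neg]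
    at hlim
  simpa only [inv_mul_cancel_left₀ hr0, mul_comm (exp _)] using hlim.const_mul r⁻¹

end

/-- For `-1 < Re s < 0` and real `a ≠ 0`, the improper integral
`∫_0^∞ e^{iax} x^{-s-1} dx` equals `(-ia)^s Γ(-s)` (principal branch powers). -/
theorem integral_exp_mul_cpow (s : ℂ) (h1 : -1 < s.re) (h2 : s.re < 0)
    (a : ℝ) (ha : a ≠ 0) :
    Tendsto (fun T : ℝ =>
        ∫ x in (0 : ℝ)..T, Complex.exp (Complex.I * a * x) * (x : ℂ) ^ (-s - 1))
      atTop (nhds ((-Complex.I * a) ^ s * Complex.Gamma (-s))) := by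
  simpa only [neg_mul, neg_neg] using
    integral_exp_mul_cpow_general s h1 h2 (-I * a) (by simp) (by simp [ha])
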